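/- arXiv:1602.02859 — 2 statements merged into one kernel-verified Lean document; each statement's English description precedes it below -/
import Mathlib

section
/- Let n ≥ 1, 1 ≤ q, q₁, q₂ ≤ ∞ and s, s₁, s₂ ∈ ℝ. If the continuous power-weighted Young inequality 𝕃(q₁,s₁) ∗ 𝕃(q₂,s₂) ⊂ 𝕃(q,s) holds (there is a constant C with ‖f∗g‖_{𝕃(q,s)} ≤ C‖f‖_{𝕃(q₁,s₁)}‖g‖_{𝕃(q₂,s₂)} for all nonnegative measurable f, g on ℝⁿ), then the discrete weighted Young inequality l(q₁,s₁) ∗ l(q₂,s₂) ⊂ l(q,s) holds (there is a constant C' with ‖a∗b‖_{l(q,s)} ≤ C'‖a‖_{l(q₁,s₁)}‖b‖_{l(q₂,s₂)} for all nonnegative sequences a, b on ℤⁿ). -/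
/-!
Given sequences `a` and `b` on `ℤⁿ`, spread `a k` over the cube `E k` with centre
`k + (1/3, …, 1/3)` and side `1/3`, and `b` likewise. If `x` lies within `1/12` (in the sup norm)
of `k + (2/3, …, 2/3)` and `y` within `1/12` of `j + (1/3, …, 1/3)`, then `x - y ∈ E (k - j)` and
`y ∈ E j`. Hence the convolution of the two step functions is at least `(1/6)ⁿ (a ∗ b)(k)` near
`k + (2/3, …, 2/3)` (`dconv_le_cconv`).

The shifts `1/3` and `2/3` keep all the cubes involved away from the origin, so on each of
them `|x|` is comparable to `⟨k⟩`, uniformly in `k` (`weight_comparison`). The singularity or the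
zero of the power weight is therefore never seen: up to constants, the norms of the step functions
are at most those of `a` and `b` (`Pns_spread_le`), and the norm of `a ∗ b` is at most that of the
convolution of the step functions (`lns_dconv_le`). Applying the continuous inequality to the two
step functions gives the discrete one.
-/

open scoped ENNReal NNReal BigOperators
open MeasureTheory

noncomputable section

/-- `1/q` for `q ∈ [0,∞]`, with the convention `1/∞ = 0`. -/
def iv (q : ℝ≥0∞) : ℝ := q⁻¹.toReal

/-- The dual exponent `q'` of `q ∈ [1,∞]`, defined by `1/q + 1/q' = 1`. -/
def dualExp (q : ℝ≥0∞) : ℝ≥0∞ :=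
  if q = ∞ then 1 else if q = 1 then ∞ else ENNReal.ofReal (q.toReal / (q.toReal - 1))

/-- Euclidean norm `|k|` of an integer vector `k ∈ ℤⁿ`. -/
def znorm {n : ℕ} (k : Fin n → ℤ) : ℝ := Real.sqrt (∑ i, ((k i : ℝ)) ^ 2)

/-- Japanese bracket `⟨k⟩ = (1+|k|²)^{1/2}` of an integer vector. -/
def zbr {n : ℕ} (k : Fin n → ℤ) : ℝ := Real.sqrt (1 + ∑ i, ((k i : ℝ)) ^ 2)

/-- Euclidean norm `|x|` on `ℝⁿ` (realized as `Fin n → ℝ`). -/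
def rnorm {n : ℕ} (x : Fin n → ℝ) : ℝ := Real.sqrt (∑ i, (x i) ^ 2)

/-- Japanese bracket `⟨x⟩ = (1+|x|²)^{1/2}` on `ℝⁿ`. -/
def rbr {n : ℕ} (x : Fin n → ℝ) : ℝ := Real.sqrt (1 + ∑ i, (x i) ^ 2)

/-- The weighted norm `‖a‖_{l(q,s)}` (weight `⟨k⟩^s`) of a nonnegative sequence on `ℤⁿ`,
valued in `ℝ≥0∞`.  For `q = ∞` it is `sup_k a_k ⟨k⟩^s`, otherwise
`(∑_k (a_k ⟨k⟩^s)^q)^{1/q}`. -/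
def lns (n : ℕ) (q : ℝ≥0∞) (s : ℝ) (a : (Fin n → ℤ) → ℝ≥0∞) : ℝ≥0∞ :=
  if q = ∞ then ⨆ k, a k * ENNReal.ofReal (zbr k ^ s)
  else (∑' k, (a k * ENNReal.ofReal (zbr k ^ s)) ^ q.toReal) ^ (1 / q.toReal)

/-- Convolution of (nonnegative) sequences on `ℤⁿ`: `(a∗b)(k) = ∑_j a_{k-j} b_j`. -/
def dconv {n : ℕ} (a b : (Fin n → ℤ) → ℝ≥0∞) : (Fin n → ℤ) → ℝ≥0∞ :=
  fun k => ∑' j, a (k - j) * b j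

/-- The weighted norm `‖f‖_{L(q,s)}` (weight `⟨x⟩^s`) of a nonnegative function on `ℝⁿ`.
For `q = ∞` it is `ess sup_x f(x) ⟨x⟩^s`, otherwise `(∫ (f(x) ⟨x⟩^s)^q dx)^{1/q}`. -/
def Lns (n : ℕ) (q : ℝ≥0∞) (s : ℝ) (f : (Fin n → ℝ) → ℝ≥0∞) : ℝ≥0∞ :=
  if q = ∞ then essSup (fun x => f x * ENNReal.ofReal (rbr x ^ s)) volume
  else (∫⁻ x, (f x * ENNReal.ofReal (rbr x ^ s)) ^ q.toReal) ^ (1 / q.toReal)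

/-- The power-weighted norm `‖f‖_{𝕃(q,s)}` (weight `|x|^s`) of a nonnegative function on `ℝⁿ`. -/
def Pns (n : ℕ) (q : ℝ≥0∞) (s : ℝ) (f : (Fin n → ℝ) → ℝ≥0∞) : ℝ≥0∞ :=
  if q = ∞ then essSup (fun x => f x * ENNReal.ofReal (rnorm x ^ s)) volume
  else (∫⁻ x, (f x * ENNReal.ofReal (rnorm x ^ s)) ^ q.toReal) ^ (1 / q.toReal)

/-- Convolution of (nonnegative) functions on `ℝⁿ`: `(f∗g)(x) = ∫ f(x-y) g(y) dy`. -/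
def cconv {n : ℕ} (f g : (Fin n → ℝ) → ℝ≥0∞) : (Fin n → ℝ) → ℝ≥0∞ :=
  fun x => ∫⁻ y, f (x - y) * g y

/-- The discrete fractional integral operator `(𝓘_λ a)(k) = ∑_{j ≠ k} a_j / |k-j|^{n-λ}`. -/
def dRiesz (n : ℕ) (lam : ℝ) (a : (Fin n → ℤ) → ℝ≥0∞) : (Fin n → ℤ) → ℝ≥0∞ :=
  fun k => ∑' j, if j = k then 0 else a j * ENNReal.ofReal (znorm (k - j) ^ (lam - (n : ℝ)))

/-- The Riesz potential `(I_λ f)(x) = ∫ f(y) / |x-y|^{n-λ} dy`. -/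
def cRiesz (n : ℕ) (lam : ℝ) (f : (Fin n → ℝ) → ℝ≥0∞) : (Fin n → ℝ) → ℝ≥0∞ :=
  fun x => ∫⁻ y, f y * ENNReal.ofReal (rnorm (x - y) ^ (lam - (n : ℝ)))

/-- Condition `𝒜₁`. -/
def condA1 (n : ℕ) (q q₁ q₂ : ℝ≥0∞) (s s₁ s₂ : ℝ) : Prop :=
  s ≤ s₁ ∧ s ≤ s₂ ∧ 0 ≤ s₁ + s₂ ∧
  1 + max (iv q + s / (n : ℝ)) 0 < max (iv q₁ + s₁ / (n : ℝ)) 0 + max (iv q₂ + s₂ / (n : ℝ)) 0 ∧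
  iv q + s / (n : ℝ) ≤ iv q₁ + s₁ / (n : ℝ) ∧
  iv q + s / (n : ℝ) ≤ iv q₂ + s₂ / (n : ℝ) ∧
  1 ≤ iv q₁ + s₁ / (n : ℝ) + iv q₂ + s₂ / (n : ℝ) ∧
  (iv q + s / (n : ℝ) = iv q₁ + s₁ / (n : ℝ) → q = q₁ ∧ s = s₁) ∧
  (iv q + s / (n : ℝ) = iv q₂ + s₂ / (n : ℝ) → q = q₂ ∧ s = s₂) ∧
  (1 = iv q₁ + s₁ / (n : ℝ) + iv q₂ + s₂ / (n : ℝ) → dualExp q₁ = q₂ ∧ -s₁ = s₂)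

/-- Condition `𝒜₂`. -/
def condA2 (q q₁ q₂ : ℝ≥0∞) (s s₁ s₂ : ℝ) : Prop :=
  s = 0 ∧ s₁ = 0 ∧ s₂ = 0 ∧
  ((q = q₁ ∧ q₂ = 1) ∨ (q = q₂ ∧ q₁ = 1) ∨ (q = ∞ ∧ iv q₁ + iv q₂ = 1))

/-- Condition `𝒜₃`. -/
def condA3 (n : ℕ) (q q₁ q₂ : ℝ≥0∞) (s s₁ s₂ : ℝ) : Prop :=
  s ≤ s₁ ∧ s ≤ s₂ ∧ iv q₁ + iv q₂ = 1 ∧ s₁ + s₂ = 0 ∧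
  iv q + s / (n : ℝ) < 0 ∧ 0 ≤ iv q₁ + s₁ / (n : ℝ) ∧ 0 ≤ iv q₂ + s₂ / (n : ℝ)

/-- Condition `𝒜₄`. -/
def condA4 (n : ℕ) (q q₁ q₂ : ℝ≥0∞) (s s₁ s₂ : ℝ) : Prop :=
  s ≤ s₁ ∧ s ≤ s₂ ∧ 0 ≤ s₁ + s₂ ∧
  1 + (iv q + s / (n : ℝ)) = iv q₁ + s₁ / (n : ℝ) + iv q₂ + s₂ / (n : ℝ) ∧
  iv q ≤ iv q₁ + iv q₂ ∧
  iv q + s / (n : ℝ) < iv q₁ + s₁ / (n : ℝ) ∧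
  iv q + s / (n : ℝ) < iv q₂ + s₂ / (n : ℝ) ∧
  0 < iv q + s / (n : ℝ) ∧
  ((s = s₁ ∨ s = s₂) → q ≠ ∞ ∧ q₁ ≠ 1 ∧ q₂ ≠ 1)

/-- Condition `𝒞₁`. -/
def condC1 (n : ℕ) (lam : ℝ) (q p : ℝ≥0∞) (s t : ℝ) : Prop :=
  s ≤ t ∧
  lam / (n : ℝ) + max (iv q + s / (n : ℝ)) 0 < max (iv p + t / (n : ℝ)) 0 ∧
  lam / (n : ℝ) + iv q + s / (n : ℝ) ≤ 1 ∧
  (lam / (n : ℝ) + iv q + s / (n : ℝ) = 1 → q = ∞ ∧ s = (n : ℝ) - lam)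

/-- Condition `𝒞₃`. -/
def condC3 (n : ℕ) (lam : ℝ) (q p : ℝ≥0∞) (s t : ℝ) : Prop :=
  s ≤ t ∧ p = 1 ∧ t = lam - (n : ℝ) ∧ iv q + s / (n : ℝ) < 0

/-- Condition `𝒞₄`. -/
def condC4 (n : ℕ) (lam : ℝ) (q p : ℝ≥0∞) (s t : ℝ) : Prop :=
  s ≤ t ∧
  lam / (n : ℝ) + iv q + s / (n : ℝ) = iv p + t / (n : ℝ) ∧
  iv q ≤ iv p ∧
  0 < iv q + s / (n : ℝ) ∧
  iv p + t / (n : ℝ) < 1 ∧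
  (s = t → q ≠ ∞ ∧ p ≠ 1)

end

/-! ### Step functions on shifted cubes and their convolution -/

/-- The closed cube with centre `k + (c, …, c)` and half-side `ρ`: a ball of the sup norm which
`Fin n → ℝ` carries. -/
def cube {n : ℕ} (c ρ : ℝ) (k : Fin n → ℤ) : Set (Fin n → ℝ) :=
  Metric.closedBall (fun i => (k i : ℝ) + c) ρ

/-- The step function equal to `a k` on the cube of side `1/3` about `k + (1/3, …, 1/3)`, and to
`0` off these (disjoint) cubes. -/
noncomputable def spread {n : ℕ} (a : (Fin n → ℤ) → ℝ≥0∞) (x : Fin n → ℝ) : ℝ≥0∞ :=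
  ∑' k, (cube (1 / 3) (1 / 6) k).indicator (fun _ => a k) x

lemma mem_cube {n : ℕ} {c ρ : ℝ} (hρ : 0 ≤ ρ) {k : Fin n → ℤ} {x : Fin n → ℝ} :
    x ∈ cube c ρ k ↔ ∀ i, (k i : ℝ) + c - ρ ≤ x i ∧ x i ≤ k i + c + ρ := by
  unfold cube
  rw [Metric.mem_closedBall, dist_pi_le_iff hρ]
  refine forall_congr' fun i => ?_
  rw [Real.dist_eq, abs_le]
  constructor <;> rintro ⟨h1, h2⟩ <;> constructor <;> linarith

lemma measurableSet_cube {n : ℕ} (c ρ : ℝ) (k : Fin n → ℤ) : MeasurableSet (cube c ρ k) :=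
  Metric.isClosed_closedBall.measurableSet

lemma volume_cube {n : ℕ} {c ρ : ℝ} (hρ : 0 ≤ ρ) (k : Fin n → ℤ) :
    volume (cube c ρ k) = ENNReal.ofReal ((2 * ρ) ^ n) := by
  unfold cube
  rw [Real.volume_pi_closedBall _ hρ, Fintype.card_fin]

lemma pairwise_disjoint_cube {n : ℕ} {c ρ : ℝ} (hρ : 0 ≤ ρ) (h0 : 0 ≤ c - ρ) (h1 : c + ρ < 1) :
    Pairwise (Function.onFun Disjoint (cube (n := n) c ρ)) := by
  intro k l hkl
  refine Set.disjoint_left.2 fun x hk hl => hkl (funext fun i => ?_)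
  -- both `k i` and `l i` are the integer part of `x i`
  have hk' := (mem_cube hρ).1 hk i
  have hl' := (mem_cube hρ).1 hl i
  have h3 : ((k i : ℤ) : ℝ) < ((l i + 1 : ℤ) : ℝ) := by push_cast; linarith
  have h4 : ((l i : ℤ) : ℝ) < ((k i + 1 : ℤ) : ℝ) := by push_cast; linarith
  have h3' := Int.cast_lt.1 h3
  have h4' := Int.cast_lt.1 h4
  omega

lemma spread_of_mem {n : ℕ} (a : (Fin n → ℤ) → ℝ≥0∞) {k : Fin n → ℤ} {x : Fin n → ℝ}
    (hx : x ∈ cube (1 / 3) (1 / 6) k) : spread a x = a k := by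
  unfold spread
  rw [tsum_eq_single k, Set.indicator_of_mem hx]
  intro l hl
  refine Set.indicator_of_notMem (fun hxl => ?_) _
  exact Set.disjoint_left.1
    (pairwise_disjoint_cube (by norm_num) (by norm_num) (by norm_num) hl) hxl hx

lemma spread_of_notMem {n : ℕ} (a : (Fin n → ℤ) → ℝ≥0∞) {x : Fin n → ℝ}
    (hx : x ∉ ⋃ k, cube (1 / 3) (1 / 6) k) : spread a x = 0 := by
  simp only [Set.mem_iUnion, not_exists] at hx
  unfold spread
  exact ENNReal.tsum_eq_zero.2 fun k => Set.indicator_of_notMem (hx k) _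

lemma measurable_spread {n : ℕ} (a : (Fin n → ℤ) → ℝ≥0∞) : Measurable (spread a) :=
  Measurable.tsum fun k => measurable_const.indicator (measurableSet_cube _ _ k)

lemma dconv_le_cconv {n : ℕ} (a b : (Fin n → ℤ) → ℝ≥0∞) {k : Fin n → ℤ} {x : Fin n → ℝ}
    (hx : x ∈ cube (2 / 3) (1 / 12) k) :
    dconv a b k * ENNReal.ofReal ((1 / 6) ^ n) ≤ cconv (spread a) (spread b) x := by
  have hdisj := pairwise_disjoint_cube (n := n) (c := 1 / 3) (ρ := 1 / 12)
    (by norm_num) (by norm_num) (by norm_num)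
  unfold dconv cconv
  calc (∑' j, a (k - j) * b j) * ENNReal.ofReal ((1 / 6) ^ n)
      = ∑' j, ∫⁻ _ in cube (1 / 3) (1 / 12) j, a (k - j) * b j := by
        rw [← ENNReal.tsum_mul_right]
        refine tsum_congr fun j => ?_
        rw [setLIntegral_const, volume_cube (by norm_num)]
        norm_num
    _ ≤ ∑' j, ∫⁻ y in cube (1 / 3) (1 / 12) j, spread a (x - y) * spread b y := by
        refine ENNReal.tsum_le_tsum fun j =>
          setLIntegral_mono' (measurableSet_cube _ _ j) fun y hy => ?_
        rw [mem_cube (by norm_num)] at hx hy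
        rw [spread_of_mem a (k := k - j) (x := x - y), spread_of_mem b (k := j) (x := y)]
        · rw [mem_cube (by norm_num)]
          intro i
          have := hy i
          constructor <;> linarith
        · rw [mem_cube (by norm_num)]
          intro i
          have := hy i
          have := hx i
          simp only [Pi.sub_apply, Int.cast_sub]
          constructor <;> linarith
    _ = ∫⁻ y in ⋃ j, cube (1 / 3) (1 / 12) j, spread a (x - y) * spread b y :=
        (lintegral_iUnion (measurableSet_cube _ _) hdisj _).symm
    _ ≤ ∫⁻ y, spread a (x - y) * spread b y := setLIntegral_le_lintegral _ _

/-! ### Comparison of the weights -/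

/-- On a cube whose coordinates have fractional parts in `[1/6, 3/4]`, the Euclidean norm is
comparable to the Japanese bracket of the corner. The lower bound on `|x|` uses `n ≥ 1`. -/
lemma rnorm_comparison {n : ℕ} (hn : 1 ≤ n) {k : Fin n → ℤ} {x : Fin n → ℝ}
    (hx : ∀ i, (k i : ℝ) + 1 / 6 ≤ x i ∧ x i ≤ k i + 3 / 4) :
    rnorm x ≤ (85 * n : ℝ) * zbr k ∧ zbr k ≤ (85 * n : ℝ) * rnorm x := by
  have hn' : (1 : ℝ) ≤ n := by exact_mod_cast hn
  have hc : ∀ i, x i ^ 2 ≤ 2 * (k i : ℝ) ^ 2 + 2 ∧ 1 + (k i : ℝ) ^ 2 ≤ 85 * x i ^ 2 := by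
    intro i
    obtain ⟨h1, h2⟩ := hx i
    rcases le_or_gt 0 (k i) with hk | hk
    · have hk' : (0 : ℝ) ≤ k i := by exact_mod_cast hk
      constructor
      · nlinarith [sq_nonneg ((k i : ℝ) - 1)]
      · nlinarith
    · have hk' : (k i : ℝ) ≤ -1 := by exact_mod_cast Int.le_sub_one_of_lt hk
      constructor
      · nlinarith [sq_nonneg ((k i : ℝ) - 1)]
      · nlinarith
  have hsk : 0 ≤ ∑ i, (k i : ℝ) ^ 2 := Finset.sum_nonneg fun i _ => sq_nonneg _
  have hsx : 0 ≤ ∑ i, x i ^ 2 := Finset.sum_nonneg fun i _ => sq_nonneg _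
  have hA : ∑ i, x i ^ 2 ≤ 2 * ∑ i, (k i : ℝ) ^ 2 + 2 * n := by
    refine (Finset.sum_le_sum fun i _ => (hc i).1).trans (le_of_eq ?_)
    rw [Finset.sum_add_distrib, ← Finset.mul_sum]
    simp [mul_comm]
  have hB : n + ∑ i, (k i : ℝ) ^ 2 ≤ 85 * ∑ i, x i ^ 2 := by
    rw [Finset.mul_sum]
    refine le_trans (le_of_eq ?_) (Finset.sum_le_sum fun i _ => (hc i).2)
    rw [Finset.sum_add_distrib]
    simp
  unfold rnorm zbr
  have h85 : (0 : ℝ) ≤ 85 * n := by positivity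
  constructor
  · refine Real.sqrt_le_iff.2 ⟨by positivity, ?_⟩
    rw [mul_pow, Real.sq_sqrt (by positivity)]
    nlinarith [mul_le_mul hn' hn' zero_le_one (by positivity),
      mul_nonneg hsk (sub_nonneg.2 (one_le_pow₀ hn' : (1 : ℝ) ≤ (n : ℝ) ^ 2))]
  · refine Real.sqrt_le_iff.2 ⟨by positivity, ?_⟩
    rw [mul_pow, Real.sq_sqrt hsx]
    nlinarith [mul_nonneg hsx (sub_nonneg.2 (one_le_pow₀ hn' : (1 : ℝ) ≤ (n : ℝ) ^ 2))]

lemma zbr_pos {n : ℕ} (k : Fin n → ℤ) : 0 < zbr k :=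
  Real.sqrt_pos.2 (by positivity)

lemma rpow_le_of_comparable {A u v s : ℝ} (hA : 1 ≤ A) (hu : 0 < u) (hv : 0 < v)
    (h1 : u ≤ A * v) (h2 : v ≤ A * u) : u ^ s ≤ A ^ |s| * v ^ s := by
  have hA0 : 0 < A := by linarith
  rcases le_total 0 s with hs | hs
  · rw [abs_of_nonneg hs, ← Real.mul_rpow hA0.le hv.le]
    exact Real.rpow_le_rpow hu.le h1 hs
  · rw [abs_of_nonpos hs]
    have h3 : (A * u) ^ s ≤ v ^ s := Real.rpow_le_rpow_of_nonpos hv h2 hs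
    rw [Real.mul_rpow hA0.le hu.le] at h3
    calc u ^ s = A ^ (-s) * (A ^ s * u ^ s) := by
          rw [← mul_assoc, ← Real.rpow_add hA0]; simp
      _ ≤ A ^ (-s) * v ^ s := by gcongr

/-- For every exponent `s`, the weights `|x|^s` and `⟨k⟩^s` are comparable on the cubes avoiding
the origin, with a constant independent of `k`. -/
lemma weight_comparison {n : ℕ} (hn : 1 ≤ n) (s : ℝ) :
    ∃ W : ℝ≥0, ∀ (k : Fin n → ℤ) (x : Fin n → ℝ),
      (∀ i, (k i : ℝ) + 1 / 6 ≤ x i ∧ x i ≤ k i + 3 / 4) →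
      ENNReal.ofReal (rnorm x ^ s) ≤ W * ENNReal.ofReal (zbr k ^ s) ∧
      ENNReal.ofReal (zbr k ^ s) ≤ W * ENNReal.ofReal (rnorm x ^ s) := by
  have hn' : (1 : ℝ) ≤ n := by exact_mod_cast hn
  refine ⟨Real.toNNReal ((85 * n : ℝ) ^ |s|), fun k x hx => ?_⟩
  obtain ⟨h1, h2⟩ := rnorm_comparison hn hx
  have hz := zbr_pos k
  have hr : 0 < rnorm x := by
    by_contra hcon
    have : (85 * n : ℝ) * rnorm x ≤ 0 :=
      mul_nonpos_of_nonneg_of_nonpos (by positivity) (not_lt.1 hcon)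
    linarith
  have hA : (1 : ℝ) ≤ 85 * n := by linarith
  have hp : (0 : ℝ) ≤ (85 * n : ℝ) ^ |s| := by positivity
  constructor
  · change _ ≤ ENNReal.ofReal _ * _
    rw [← ENNReal.ofReal_mul hp]
    exact ENNReal.ofReal_le_ofReal (rpow_le_of_comparable hA hr hz h1 h2)
  · change _ ≤ ENNReal.ofReal _ * _
    rw [← ENNReal.ofReal_mul hp]
    exact ENNReal.ofReal_le_ofReal (rpow_le_of_comparable hA hz hr h2 h1)

/-! ### Comparison of the norms -/

/-- A function supported on disjoint sets `E k` of measure at most `1`, and bounded by `W * u k` on the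
`k`-th of them, has `L^q` norm at most `W` times the `l^q` norm of `u`. -/
lemma mixed_le_seq {n : ℕ} {q : ℝ≥0∞} (hq : 1 ≤ q) {G : (Fin n → ℝ) → ℝ≥0∞}
    {u : (Fin n → ℤ) → ℝ≥0∞} {W : ℝ≥0∞} {E : (Fin n → ℤ) → Set (Fin n → ℝ)}
    (hm : ∀ k, MeasurableSet (E k)) (hd : Pairwise (Function.onFun Disjoint E))
    (hv : ∀ k, volume (E k) ≤ 1) (h0 : ∀ x, x ∉ ⋃ k, E k → G x = 0)
    (h1 : ∀ k, ∀ x ∈ E k, G x ≤ W * u k) :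
    (if q = ∞ then essSup G volume else (∫⁻ x, G x ^ q.toReal) ^ (1 / q.toReal)) ≤
      W * (if q = ∞ then ⨆ k, u k else (∑' k, u k ^ q.toReal) ^ (1 / q.toReal)) := by
  split_ifs with hqt
  · refine essSup_le_of_ae_le _ (Filter.Eventually.of_forall fun x => ?_)
    by_cases hx : x ∈ ⋃ k, E k
    · obtain ⟨k, hk⟩ := Set.mem_iUnion.1 hx
      exact (h1 k x hk).trans (mul_le_mul_right (le_iSup u k) W)
    · simp [h0 x hx]
  · have hp : 0 < q.toReal := ENNReal.toReal_pos (zero_lt_one.trans_le hq).ne' hqt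
    have key : ∫⁻ x, G x ^ q.toReal ≤ W ^ q.toReal * ∑' k, u k ^ q.toReal := by
      calc ∫⁻ x, G x ^ q.toReal = ∫⁻ x in ⋃ k, E k, G x ^ q.toReal := by
            refine (setLIntegral_eq_of_support_subset fun x hx => ?_).symm
            by_contra hc
            exact hx (by simp [h0 x hc, hp])
        _ = ∑' k, ∫⁻ x in E k, G x ^ q.toReal := lintegral_iUnion hm hd _
        _ ≤ ∑' k, W ^ q.toReal * u k ^ q.toReal := by
            refine ENNReal.tsum_le_tsum fun k => ?_
            calc ∫⁻ x in E k, G x ^ q.toReal ≤ ∫⁻ _ in E k, (W * u k) ^ q.toReal :=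
                  setLIntegral_mono' (hm k) fun x hx => by gcongr; exact h1 k x hx
              _ = (W * u k) ^ q.toReal * volume (E k) := setLIntegral_const _ _
              _ ≤ (W * u k) ^ q.toReal := mul_le_of_le_one_right' (hv k)
              _ = _ := ENNReal.mul_rpow_of_nonneg _ _ hp.le
        _ = _ := ENNReal.tsum_mul_left
    calc (∫⁻ x, G x ^ q.toReal) ^ (1 / q.toReal)
        ≤ (W ^ q.toReal * ∑' k, u k ^ q.toReal) ^ (1 / q.toReal) := by gcongr
      _ = _ := by
        rw [ENNReal.mul_rpow_of_nonneg _ _ (by positivity), ← ENNReal.rpow_mul,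
          mul_one_div_cancel hp.ne', ENNReal.rpow_one]

/-- If `u k ≤ W * G` on the `k`-th of a family of disjoint sets of common measure `v ≤ 1`, then
the `l^q` norm of `u` is at most `W * v⁻¹` times the `L^q` norm of `G`. The natural factor
`v⁻¹ ^ (1/q)` is bounded by `v⁻¹` so that the constant does not depend on `q`. -/
lemma seq_le_mixed {n : ℕ} {q : ℝ≥0∞} (hq : 1 ≤ q) {G : (Fin n → ℝ) → ℝ≥0∞}
    {u : (Fin n → ℤ) → ℝ≥0∞} {W v : ℝ≥0∞} {E : (Fin n → ℤ) → Set (Fin n → ℝ)}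
    (hm : ∀ k, MeasurableSet (E k)) (hd : Pairwise (Function.onFun Disjoint E))
    (hv : ∀ k, volume (E k) = v) (hv0 : v ≠ 0) (hv1 : v ≤ 1) (hW : W ≠ ∞)
    (h1 : ∀ k, ∀ x ∈ E k, u k ≤ W * G x) :
    (if q = ∞ then ⨆ k, u k else (∑' k, u k ^ q.toReal) ^ (1 / q.toReal)) ≤
      W * v⁻¹ *
        (if q = ∞ then essSup G volume else (∫⁻ x, G x ^ q.toReal) ^ (1 / q.toReal)) := by
  have hv1' : 1 ≤ v⁻¹ := ENNReal.one_le_inv.2 hv1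
  have hvt : v ≠ ∞ := (hv1.trans_lt ENNReal.one_lt_top).ne
  split_ifs with hqt
  · refine iSup_le fun k => ?_
    -- a set of positive measure meets the full-measure set where `G ≤ essSup G`
    obtain ⟨x, hx, hxk⟩ : ∃ x, G x ≤ essSup G volume ∧ x ∈ E k := by
      by_contra! hcon
      have hsub : E k ⊆ {x | ¬ G x ≤ essSup G volume} :=
        fun x hx hle => hcon x hle hx
      have h0 : volume (E k) = 0 := measure_mono_null hsub (ENNReal.ae_le_essSup G)
      exact hv0 (by rw [← hv k, h0])
    calc u k ≤ W * G x := h1 k x hxk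
      _ ≤ W * v⁻¹ * essSup G volume := by
        gcongr
        exact le_mul_of_one_le_right' hv1'
  · have hp : 0 < q.toReal := ENNReal.toReal_pos (zero_lt_one.trans_le hq).ne' hqt
    have hp1 : 1 ≤ q.toReal := by
      simpa using ENNReal.toReal_mono hqt hq
    have key : ∑' k, u k ^ q.toReal ≤ v⁻¹ * (W ^ q.toReal * ∫⁻ x, G x ^ q.toReal) := by
      calc ∑' k, u k ^ q.toReal = ∑' k, v⁻¹ * ∫⁻ _ in E k, u k ^ q.toReal := by
            refine tsum_congr fun k => ?_
            rw [setLIntegral_const, hv k, mul_comm, mul_assoc, ENNReal.mul_inv_cancel hv0 hvt,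
              mul_one]
        _ = v⁻¹ * ∑' k, ∫⁻ _ in E k, u k ^ q.toReal := ENNReal.tsum_mul_left
        _ ≤ v⁻¹ * ∑' k, ∫⁻ x in E k, W ^ q.toReal * G x ^ q.toReal := by
            refine mul_le_mul_right (ENNReal.tsum_le_tsum fun k =>
              setLIntegral_mono' (hm k) fun x hx => ?_) _
            rw [← ENNReal.mul_rpow_of_nonneg _ _ hp.le]
            gcongr
            exact h1 k x hx
        _ = v⁻¹ * ∫⁻ x in ⋃ k, E k, W ^ q.toReal * G x ^ q.toReal := by
            rw [lintegral_iUnion hm hd]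
        _ ≤ v⁻¹ * ∫⁻ x, W ^ q.toReal * G x ^ q.toReal :=
            mul_le_mul_right (setLIntegral_le_lintegral _ _) _
        _ = _ := by
            rw [lintegral_const_mul' _ _ (ENNReal.rpow_ne_top_of_nonneg hp.le hW)]
    calc (∑' k, u k ^ q.toReal) ^ (1 / q.toReal)
        ≤ (v⁻¹ * (W ^ q.toReal * ∫⁻ x, G x ^ q.toReal)) ^ (1 / q.toReal) := by gcongr
      _ = v⁻¹ ^ (1 / q.toReal) * (W * (∫⁻ x, G x ^ q.toReal) ^ (1 / q.toReal)) := by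
        rw [ENNReal.mul_rpow_of_nonneg _ _ (by positivity),
          ENNReal.mul_rpow_of_nonneg _ _ (by positivity), ← ENNReal.rpow_mul W,
          mul_one_div_cancel hp.ne', ENNReal.rpow_one]
      _ ≤ v⁻¹ * (W * (∫⁻ x, G x ^ q.toReal) ^ (1 / q.toReal)) := by
        gcongr
        calc v⁻¹ ^ (1 / q.toReal) ≤ v⁻¹ ^ (1 : ℝ) :=
              ENNReal.rpow_le_rpow_of_exponent_le hv1' ((div_le_one hp).2 hp1)
          _ = v⁻¹ := ENNReal.rpow_one _
      _ = _ := by ring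

lemma Pns_spread_le {n : ℕ} (hn : 1 ≤ n) {q : ℝ≥0∞} (hq : 1 ≤ q) (s : ℝ) :
    ∃ W : ℝ≥0, ∀ a : (Fin n → ℤ) → ℝ≥0∞, Pns n q s (spread a) ≤ W * lns n q s a := by
  obtain ⟨W, hW⟩ := weight_comparison hn s
  refine ⟨W, fun a => mixed_le_seq hq (E := cube (1 / 3) (1 / 6)) (measurableSet_cube _ _)
    (pairwise_disjoint_cube (by norm_num) (by norm_num) (by norm_num)) (fun k => ?_)
    (fun x hx => by simp [spread_of_notMem a hx]) (fun k x hx => ?_)⟩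
  · rw [volume_cube (by norm_num)]
    exact ENNReal.ofReal_le_one.2 (pow_le_one₀ (by norm_num) (by norm_num))
  · rw [spread_of_mem a hx, mul_left_comm]
    gcongr
    refine (hW k x fun i => ?_).1
    have := (mem_cube (by norm_num)).1 hx i
    constructor <;> linarith

lemma lns_dconv_le {n : ℕ} (hn : 1 ≤ n) {q : ℝ≥0∞} (hq : 1 ≤ q) (s : ℝ) :
    ∃ K : ℝ≥0, ∀ a b : (Fin n → ℤ) → ℝ≥0∞,
      lns n q s (dconv a b) ≤ K * Pns n q s (cconv (spread a) (spread b)) := by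
  obtain ⟨W, hW⟩ := weight_comparison hn s
  set v : ℝ≥0∞ := ENNReal.ofReal ((1 / 6 : ℝ) ^ n) with hv
  have hv0 : v ≠ 0 := by rw [hv]; exact (ENNReal.ofReal_pos.2 (by positivity)).ne'
  have hv1 : v ≤ 1 := ENNReal.ofReal_le_one.2 (pow_le_one₀ (by norm_num) (by norm_num))
  have hvt : v ≠ ∞ := ENNReal.ofReal_ne_top
  have hvi : v⁻¹ ≠ ∞ := ENNReal.inv_ne_top.2 hv0
  have hWv : (W : ℝ≥0∞) * v⁻¹ ≠ ∞ := ENNReal.mul_ne_top ENNReal.coe_ne_top hvi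
  refine ⟨((W : ℝ≥0∞) * v⁻¹ * v⁻¹).toNNReal, fun a b => ?_⟩
  rw [ENNReal.coe_toNNReal (ENNReal.mul_ne_top hWv hvi)]
  refine seq_le_mixed hq (E := cube (2 / 3) (1 / 12)) (measurableSet_cube _ _)
    (pairwise_disjoint_cube (by norm_num) (by norm_num) (by norm_num)) (fun k => ?_) hv0 hv1 hWv
    (fun k x hx => ?_)
  · rw [volume_cube (by norm_num), hv]
    norm_num
  · have hw := (hW k x fun i => by
      have := (mem_cube (by norm_num)).1 hx i
      constructor <;> linarith).2
    have hc : dconv a b k ≤ v⁻¹ * cconv (spread a) (spread b) x := by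
      calc dconv a b k = v⁻¹ * (dconv a b k * v) := by
            rw [mul_left_comm, ENNReal.inv_mul_cancel hv0 hvt, mul_one]
        _ ≤ _ := by gcongr; exact dconv_le_cconv a b hx
    calc dconv a b k * ENNReal.ofReal (zbr k ^ s)
        ≤ (v⁻¹ * cconv (spread a) (spread b) x) * (W * ENNReal.ofReal (rnorm x ^ s)) := by gcongr
      _ = _ := by ring

/-! ### The discrete inequality -/

/-- the continuous power-weighted Young inequality implies the
discrete weighted Young inequality. -/
theorem power_weighted_young_implies_discrete
    (n : ℕ) (hn : 1 ≤ n) (q q₁ q₂ : ℝ≥0∞) (hq : 1 ≤ q) (hq₁ : 1 ≤ q₁) (hq₂ : 1 ≤ q₂)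
    (s s₁ s₂ : ℝ)
    (h : ∃ C : ℝ≥0, ∀ f g : (Fin n → ℝ) → ℝ≥0∞, Measurable f → Measurable g →
        Pns n q s (cconv f g) ≤ C * Pns n q₁ s₁ f * Pns n q₂ s₂ g) :
    ∃ C' : ℝ≥0, ∀ a b : (Fin n → ℤ) → ℝ≥0∞,
      lns n q s (dconv a b) ≤ C' * lns n q₁ s₁ a * lns n q₂ s₂ b := by
  obtain ⟨C, hC⟩ := h
  obtain ⟨W₁, hW₁⟩ := Pns_spread_le hn hq₁ s₁
  obtain ⟨W₂, hW₂⟩ := Pns_spread_le hn hq₂ s₂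
  obtain ⟨K, hK⟩ := lns_dconv_le hn hq s
  refine ⟨K * C * W₁ * W₂, fun a b => ?_⟩
  calc lns n q s (dconv a b) ≤ K * Pns n q s (cconv (spread a) (spread b)) := hK a b
    _ ≤ K * (C * Pns n q₁ s₁ (spread a) * Pns n q₂ s₂ (spread b)) := by
        gcongr
        exact hC _ _ (measurable_spread a) (measurable_spread b)
    _ ≤ K * (C * (W₁ * lns n q₁ s₁ a) * (W₂ * lns n q₂ s₂ b)) := by
        gcongr
        · exact hW₁ a
        · exact hW₂ b
    _ = _ := by push_cast; ring
end

section
/- Let n ≥ 1, 0 < q, q₁, q₂ ≤ ∞ and s, s₁, s₂ ∈ ℝ with s > 0. If s ≤ s₁, s ≤ s₂, 1/q ≤ 1/q₁, 1/q ≤ 1/q₂, 1 + 1/q + s/n < 1/q₁ + s₁/n + 1/q₂ + s₂/n, and 1 + 1/q ≥ 1/q₁ + 1/q₂, then the continuous weighted Young inequality L(q₁,s₁) ∗ L(q₂,s₂) ⊂ L(q,s) holds, i.e., there is a constant C with ‖f∗g‖_{L(q,s)} ≤ C‖f‖_{L(q₁,s₁)}‖g‖_{L(q₂,s₂)} for all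 nonnegative measurable f, g on ℝⁿ. -/
/-! The conditions force `1 ≤ q`, `q₁`, `q₂`. Since `⟨x⟩ ≤ 2 max(⟨x-y⟩, ⟨y⟩)`, the weight
`⟨x⟩^s` can be moved onto one of the factors (`wt_le`), so pointwise
`⟨x⟩^s (f ∗ g) ≤ 2^s ((f⟨·⟩^s) ∗ g + f ∗ (g⟨·⟩^s))`, and Minkowski's inequality reduces the claim to
bounding either convolution in the unweighted space `L^q` (lemma `half`). The weights left over
are `(a₁, a₂) = (s₁ - s, s₂)` and `(s₁, s₂ - s)`, with `a₁ + a₂ > n D`, where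
`D = 1 + 1/q - 1/q₁ - 1/q₂ ≥ 0`. Put `1/rᵢ = 1/qᵢ + D aᵢ / (a₁ + a₂)`. By Hölder's inequality
against `⟨x⟩^{-aᵢ}`, the space `L(qᵢ, aᵢ)` embeds into `L^{rᵢ}` (lemma `embed`), and
`1/r₁ + 1/r₂ = 1 + 1/q`, which is the exponent relation of Young's convolution inequality
(lemma `young`). -/

open scoped ENNReal NNReal BigOperators
open MeasureTheory

/-! ### The bracket and its powers -/

lemma rbr_pos {n : ℕ} (x : Fin n → ℝ) : 0 < rbr x :=
  Real.sqrt_pos.2 (by positivity)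

lemma one_le_rbr {n : ℕ} (x : Fin n → ℝ) : 1 ≤ rbr x :=
  Real.one_le_sqrt.2 (le_add_of_nonneg_right (by positivity))

lemma measurable_rbr {n : ℕ} : Measurable (rbr (n := n)) := by
  unfold rbr
  fun_prop

/-- The weight `⟨x⟩^a` as an extended nonnegative real. -/
noncomputable def wt {n : ℕ} (a : ℝ) (x : Fin n → ℝ) : ℝ≥0∞ := ENNReal.ofReal (rbr x ^ a)

@[fun_prop]
lemma measurable_wt {n : ℕ} (a : ℝ) : Measurable (wt (n := n) a) :=
  (measurable_rbr.pow_const a).ennreal_ofReal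

lemma wt_mul_wt {n : ℕ} (a b : ℝ) (x : Fin n → ℝ) : wt a x * wt b x = wt (a + b) x := by
  unfold wt
  rw [← ENNReal.ofReal_mul (Real.rpow_nonneg (rbr_pos x).le _), Real.rpow_add (rbr_pos x)]

lemma wt_zero {n : ℕ} (x : Fin n → ℝ) : wt 0 x = 1 := by simp [wt]

lemma one_le_wt {n : ℕ} {a : ℝ} (ha : 0 ≤ a) (x : Fin n → ℝ) : 1 ≤ wt a x :=
  ENNReal.one_le_ofReal.2 (Real.one_le_rpow (one_le_rbr x) ha)

lemma wt_rpow {n : ℕ} (a : ℝ) {t : ℝ} (ht : 0 ≤ t) (x : Fin n → ℝ) :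
    wt a x ^ t = wt (a * t) x := by
  unfold wt
  rw [ENNReal.ofReal_rpow_of_nonneg (Real.rpow_nonneg (rbr_pos x).le _) ht,
    ← Real.rpow_mul (rbr_pos x).le]

lemma rbr_le {n : ℕ} (x y : Fin n → ℝ) : rbr x ≤ 2 * max (rbr (x - y)) (rbr y) := by
  have h0 : 0 ≤ max (rbr (x - y)) (rbr y) := (rbr_pos y).le.trans (le_max_right _ _)
  have h1 : 1 + ∑ i, (x - y) i ^ 2 ≤ max (rbr (x - y)) (rbr y) ^ 2 :=
    (Real.sqrt_le_left h0).1 (le_max_left _ _)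
  have h2 : 1 + ∑ i, y i ^ 2 ≤ max (rbr (x - y)) (rbr y) ^ 2 :=
    (Real.sqrt_le_left h0).1 (le_max_right _ _)
  have h3 : ∑ i, x i ^ 2 ≤ 2 * ∑ i, (x - y) i ^ 2 + 2 * ∑ i, y i ^ 2 := by
    rw [Finset.mul_sum, Finset.mul_sum, ← Finset.sum_add_distrib]
    refine Finset.sum_le_sum fun i _ => ?_
    simp only [Pi.sub_apply]
    nlinarith [sq_nonneg (x i - y i - y i)]
  exact Real.sqrt_le_iff.2 ⟨by positivity, by nlinarith⟩

/-- Quasi-subadditivity of the weight, which lets one put `⟨x⟩^s` on either factor of a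
convolution. -/
lemma wt_le {n : ℕ} {s : ℝ} (hs : 0 ≤ s) (x y : Fin n → ℝ) :
    wt s x ≤ ENNReal.ofReal (2 ^ s) * (wt s (x - y) + wt s y) := by
  have hx := (rbr_pos x).le
  have h1 := (rbr_pos (x - y)).le
  have h2 := (rbr_pos y).le
  unfold wt
  rw [← ENNReal.ofReal_add (by positivity) (by positivity),
    ← ENNReal.ofReal_mul (by positivity)]
  refine ENNReal.ofReal_le_ofReal ((Real.rpow_le_rpow hx (rbr_le x y) hs).trans ?_)
  rw [Real.mul_rpow (by norm_num) (h1.trans (le_max_left _ _))]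
  refine mul_le_mul_of_nonneg_left ?_ (by positivity)
  rcases max_choice (rbr (x - y)) (rbr y) with h | h <;> rw [h]
  · exact le_add_of_nonneg_right (by positivity)
  · exact le_add_of_nonneg_left (by positivity)

lemma one_add_norm_le {n : ℕ} (x : Fin n → ℝ) : 1 + ‖x‖ ≤ 2 * rbr x := by
  have h : ‖x‖ ≤ rbr x := by
    refine (pi_norm_le_iff_of_nonneg (rbr_pos x).le).2 fun i => ?_
    rw [Real.norm_eq_abs]
    refine Real.abs_le_sqrt ?_
    have := Finset.single_le_sum (f := fun i => x i ^ 2) (fun i _ => sq_nonneg _)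
      (Finset.mem_univ i)
    linarith
  linarith [one_le_rbr x]

/-- Negative powers of the bracket below `-n` are integrable. -/
lemma lintegral_wt_lt_top {n : ℕ} {b : ℝ} (hb : (n : ℝ) < b) :
    ∫⁻ x : Fin n → ℝ, wt (-b) x < ∞ := by
  have hb0 : 0 < b := n.cast_nonneg.trans_lt hb
  have hfin := finite_integral_one_add_norm (E := Fin n → ℝ) (μ := volume) (r := b) (by simpa)
  have hle : ∀ x : Fin n → ℝ,
      wt (-b) x ≤ ENNReal.ofReal (2 ^ b) * ENNReal.ofReal ((1 + ‖x‖) ^ (-b)) := by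
    intro x
    unfold wt
    rw [← ENNReal.ofReal_mul (by positivity)]
    refine ENNReal.ofReal_le_ofReal ?_
    have h1 : (2 * rbr x) ^ (-b) ≤ (1 + ‖x‖) ^ (-b) :=
      Real.rpow_le_rpow_of_nonpos (by positivity) (one_add_norm_le x) (by linarith)
    rw [Real.mul_rpow (by norm_num) (rbr_pos x).le] at h1
    calc rbr x ^ (-b) = 2 ^ b * (2 ^ (-b) * rbr x ^ (-b)) := by
          rw [← mul_assoc, ← Real.rpow_add (by norm_num)]; simp
      _ ≤ _ := by gcongr
  refine (lintegral_mono hle).trans_lt ?_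
  rw [lintegral_const_mul' _ _ ENNReal.ofReal_ne_top]
  exact ENNReal.mul_lt_top ENNReal.ofReal_lt_top hfin

/-! ### Weighted norms and embeddings into Lebesgue spaces -/

lemma Lns_eq_eLpNorm {n : ℕ} {q : ℝ≥0∞} (hq : 0 < q) (s : ℝ) (f : (Fin n → ℝ) → ℝ≥0∞) :
    Lns n q s f = eLpNorm (fun x => f x * wt s x) q volume := by
  unfold Lns
  split_ifs with h
  · subst h
    rfl
  · rw [eLpNorm_eq_lintegral_rpow_enorm_toReal hq.ne' h]
    rfl

lemma iv_inj {p q : ℝ≥0∞} (hp : 0 < p) (hq : 0 < q) (h : iv p = iv q) : p = q :=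
  inv_injective <| (ENNReal.toReal_eq_toReal_iff' (ENNReal.inv_ne_top.2 hp.ne')
    (ENNReal.inv_ne_top.2 hq.ne')).1 h

lemma iv_eq (p : ℝ≥0∞) : iv p = 1 / p.toReal := by
  rw [iv, ENNReal.toReal_inv, one_div]

lemma iv_nonneg (p : ℝ≥0∞) : 0 ≤ iv p := ENNReal.toReal_nonneg

lemma one_le_of_iv_le {p : ℝ≥0∞} (hp : 0 < p) (h : iv p ≤ 1) : 1 ≤ p := by
  rw [← ENNReal.inv_le_one]
  have := (ENNReal.toReal_le_toReal (ENNReal.inv_ne_top.2 hp.ne') ENNReal.one_ne_top).1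
    (show (p⁻¹).toReal ≤ (1 : ℝ≥0∞).toReal by simpa [iv] using h)
  exact this

/-- The embedding `L(q,a) ⊂ L^r` for `1/q ≤ 1/r < 1/q + a/n` (or `r = q`): Hölder's inequality
against `⟨x⟩^{-a}`. -/
lemma embed {n : ℕ} (hn : 1 ≤ n) {q r : ℝ≥0∞} (hq : 0 < q) (hr : 0 < r) {a : ℝ} (ha : 0 ≤ a)
    (h : iv q ≤ iv r) (h' : iv r = iv q ∨ iv r < iv q + a / n) :
    ∃ C : ℝ≥0, ∀ F : (Fin n → ℝ) → ℝ≥0∞, Measurable F →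
      eLpNorm F r volume ≤ C * eLpNorm (fun x => F x * wt a x) q volume := by
  have hn0 : (0 : ℝ) < n := by exact_mod_cast hn
  rcases h.eq_or_lt with heq | hlt
  · refine ⟨1, fun F _ => ?_⟩
    rw [iv_inj hq hr heq, ENNReal.coe_one, one_mul]
    refine eLpNorm_mono_enorm fun x => ?_
    simp only [enorm_eq_self]
    exact le_mul_of_one_le_right' (one_le_wt ha x)
  have h' : iv r < iv q + a / n := h'.resolve_left hlt.ne'
  have hrtop : r ≠ ∞ := by
    rintro rfl
    exact absurd (iv_nonneg q) (not_le.2 (by simpa [iv] using hlt))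
  have hr0 : 0 < r.toReal := ENNReal.toReal_pos hr.ne' hrtop
  -- `t` is the exponent in which `⟨x⟩^{-a}` has to be integrable
  set t : ℝ := 1 / (iv r - iv q) with ht
  have ht0 : 0 < t := one_div_pos.2 (by linarith)
  have hat : (n : ℝ) < a * t := by
    rw [ht, mul_one_div, lt_div_iff₀ (by linarith)]
    rw [← sub_lt_iff_lt_add', lt_div_iff₀ hn0] at h'
    linarith
  have hI := lintegral_wt_lt_top hat
  have hC : (∫⁻ x : Fin n → ℝ, wt (-(a * t)) x) ^ (1 / t) ≠ ∞ :=
    (ENNReal.rpow_lt_top_of_nonneg (by positivity) hI.ne).ne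
  have hcancel : ∀ (F : (Fin n → ℝ) → ℝ≥0∞) x, F x = F x * wt a x * wt (-a) x := by
    intro F x
    rw [mul_assoc, wt_mul_wt, add_neg_cancel, wt_zero, mul_one]
  have hpow : ∀ x : Fin n → ℝ, wt (-a) x ^ t = wt (-(a * t)) x := by
    intro x
    rw [wt_rpow _ ht0.le, neg_mul]
  refine ⟨((∫⁻ x : Fin n → ℝ, wt (-(a * t)) x) ^ (1 / t)).toNNReal, fun F hF => ?_⟩
  rw [ENNReal.coe_toNNReal hC, eLpNorm_eq_lintegral_rpow_enorm_toReal hr.ne' hrtop]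
  simp only [enorm_eq_self]
  by_cases hqtop : q = ∞
  · subst hqtop
    have htr : t = r.toReal := by rw [ht, iv_eq, iv_eq]; simp
    rw [eLpNorm_exponent_top]
    set M := eLpNormEssSup (fun x => F x * wt a x) volume with hM
    have hae : ∀ᵐ x, F x * wt a x ≤ M := by
      simpa using enorm_ae_le_eLpNormEssSup (fun x => F x * wt a x) volume
    have hb : ∫⁻ x, F x ^ r.toReal ≤ M ^ r.toReal * ∫⁻ x : Fin n → ℝ, wt (-(a * t)) x := by
      rw [← lintegral_const_mul _ (measurable_wt _)]
      refine lintegral_mono_ae ?_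
      filter_upwards [hae] with x hx
      rw [hcancel F x, ENNReal.mul_rpow_of_nonneg _ _ hr0.le, ← htr, hpow]
      gcongr
    calc _ ≤ (M ^ r.toReal * ∫⁻ x : Fin n → ℝ, wt (-(a * t)) x) ^ (1 / r.toReal) := by gcongr
      _ = _ := by
        rw [ENNReal.mul_rpow_of_nonneg _ _ (by positivity), one_div,
          ENNReal.rpow_rpow_inv hr0.ne', htr, one_div, mul_comm]
  · have hq0 : 0 < q.toReal := ENNReal.toReal_pos hq.ne' hqtop
    rw [eLpNorm_eq_lintegral_rpow_enorm_toReal hq.ne' hqtop]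
    have hrq : r.toReal < q.toReal := by
      rw [iv_eq, iv_eq] at hlt
      exact (one_div_lt_one_div hq0 hr0).1 hlt
    have := ENNReal.lintegral_Lp_mul_le_Lq_mul_Lr hr0 hrq (r := t)
      (by rw [ht, ← iv_eq, ← iv_eq]; simp) volume (f := fun x => F x * wt a x)
      (g := wt (-a)) (hF.mul (measurable_wt a)).aemeasurable (measurable_wt (-a)).aemeasurable
    simp only [Pi.mul_apply, ← hcancel, hpow] at this
    simpa only [enorm_eq_self, mul_comm] using this

/-! ### Young's convolution inequality -/

lemma measurable_cconv {n : ℕ} {F G : (Fin n → ℝ) → ℝ≥0∞} (hF : Measurable F)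
    (hG : Measurable G) : Measurable (cconv F G) := by
  unfold cconv
  exact Measurable.lintegral_prod_right' (f := fun z : (Fin n → ℝ) × (Fin n → ℝ) =>
    F (z.1 - z.2) * G z.2) (by fun_prop)

lemma cconv_comm {n : ℕ} (F G : (Fin n → ℝ) → ℝ≥0∞) : cconv F G = cconv G F := by
  funext x
  unfold cconv
  rw [← lintegral_sub_left_eq_self _ x]
  simp [mul_comm]

lemma lintegral_cconv {n : ℕ} {F G : (Fin n → ℝ) → ℝ≥0∞} (hF : Measurable F)
    (hG : Measurable G) : ∫⁻ x, cconv F G x = (∫⁻ x, F x) * ∫⁻ x, G x := by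
  unfold cconv
  rw [lintegral_lintegral_swap (by fun_prop)]
  rw [← lintegral_const_mul _ hG]
  refine lintegral_congr fun y => ?_
  rw [lintegral_mul_const _ (by fun_prop), lintegral_sub_right_eq_self (fun x => F x) y]

lemma cconv_le_top_one {n : ℕ} {F G : (Fin n → ℝ) → ℝ≥0∞} (hG : Measurable G) (x : Fin n → ℝ) :
    cconv F G x ≤ eLpNorm F ∞ volume * eLpNorm G 1 volume := by
  rw [eLpNorm_exponent_top, eLpNorm_one_eq_lintegral_enorm]
  simp only [enorm_eq_self]
  rw [← lintegral_const_mul _ hG]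
  have hae : ∀ᵐ z, F z ≤ eLpNormEssSup F volume := by
    simpa using enorm_ae_le_eLpNormEssSup F volume
  have hae' : ∀ᵐ y, F (x - y) ≤ eLpNormEssSup F volume :=
    (Measure.measurePreserving_sub_left volume x).quasiMeasurePreserving.ae hae
  refine lintegral_mono_ae ?_
  filter_upwards [hae'] with y hy
  gcongr

lemma eLpNorm_top_le {n : ℕ} {H : (Fin n → ℝ) → ℝ≥0∞} {M : ℝ≥0∞} (h : ∀ x, H x ≤ M) :
    eLpNorm H ∞ volume ≤ M := by
  rw [eLpNorm_exponent_top]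
  exact essSup_le_of_ae_le _ (Filter.Eventually.of_forall h)

/-- The pointwise estimate behind Young's inequality: Hölder's inequality with the exponents
`1/q`, `1/p - 1/q`, `1/r - 1/q`, whose sum is `1`, with `c` in the role of `1/q`. -/
lemma cconv_le_holder {n : ℕ} {p r c : ℝ} (hp : 0 < p) (hr : 0 < r) (hc : 0 ≤ c)
    (hcp : c ≤ 1 / p) (hcr : c ≤ 1 / r) (h : 1 / p + 1 / r = 1 + c)
    {F G : (Fin n → ℝ) → ℝ≥0∞} (hF : Measurable F) (hG : Measurable G) (x : Fin n → ℝ) :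
    cconv F G x ≤ cconv (fun z => F z ^ p) (fun z => G z ^ r) x ^ c *
      ((∫⁻ z, F z ^ p) ^ (1 / p - c) * (∫⁻ z, G z ^ r) ^ (1 / r - c)) := by
  have hrep : ∀ (u : ℝ≥0∞) {p : ℝ}, 0 < p → c ≤ 1 / p →
      u = (u ^ p) ^ c * (u ^ p) ^ (1 / p - c) := by
    intro u p hp hcp
    rw [← ENNReal.rpow_add_of_nonneg _ _ hc (by linarith), add_sub_cancel, one_div,
      ENNReal.rpow_rpow_inv hp.ne']
  have key := ENNReal.lintegral_mul_prod_norm_pow_le (μ := (volume : Measure (Fin n → ℝ)))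
    (Finset.univ : Finset (Fin 2))
    (g := fun y => F (x - y) ^ p * G y ^ r)
    (f := ![fun y => F (x - y) ^ p, fun y => G y ^ r])
    (by fun_prop)
    (by
      intro i _
      fin_cases i <;> simp <;> fun_prop)
    c (p := ![1 / p - c, 1 / r - c])
    (by simp [Fin.sum_univ_two]; simp at h; linarith) hc
    (by
      intro i _
      fin_cases i <;> simp <;> simp at hcp hcr <;> linarith)
  simp only [Fin.prod_univ_two, Matrix.cons_val_zero, Matrix.cons_val_one] at key
  rw [lintegral_sub_left_eq_self (fun z => F z ^ p) x] at key
  refine le_trans (le_of_eq (lintegral_congr fun y => ?_)) key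
  conv_lhs => rw [hrep (F (x - y)) hp hcp, hrep (G y) hr hcr]
  rw [ENNReal.mul_rpow_of_nonneg _ _ hc]
  ring

/-- **Young's convolution inequality** for nonnegative functions, including infinite exponents. -/
lemma young {n : ℕ} {p r q : ℝ≥0∞} (hp : 0 < p) (hr : 0 < r) (hq : 0 < q)
    (hqp : iv q ≤ iv p) (hqr : iv q ≤ iv r) (h : iv p + iv r = 1 + iv q)
    {F G : (Fin n → ℝ) → ℝ≥0∞} (hF : Measurable F) (hG : Measurable G) :
    eLpNorm (cconv F G) q volume ≤ eLpNorm F p volume * eLpNorm G r volume := by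
  have ivtop : iv ∞ = 0 := by simp [iv]
  have ivone : iv 1 = 1 := by simp [iv]
  by_cases hpt : p = ∞
  · subst hpt
    have hq' : q = ∞ := iv_inj hq (by simp) (le_antisymm hqp (ivtop ▸ iv_nonneg q))
    subst hq'
    have hr' : r = 1 := iv_inj hr (by simp) (by rw [ivone]; linarith)
    subst hr'
    exact eLpNorm_top_le (cconv_le_top_one hG)
  by_cases hrt : r = ∞
  · subst hrt
    have hq' : q = ∞ := iv_inj hq (by simp) (le_antisymm hqr (ivtop ▸ iv_nonneg q))
    subst hq'
    have hp' : p = 1 := iv_inj hp (by simp) (by rw [ivone]; linarith)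
    subst hp'
    rw [cconv_comm, mul_comm]
    exact eLpNorm_top_le (cconv_le_top_one hF)
  have hp0 := ENNReal.toReal_pos hp.ne' hpt
  have hr0 := ENNReal.toReal_pos hr.ne' hrt
  rw [eLpNorm_eq_lintegral_rpow_enorm_toReal hp.ne' hpt,
    eLpNorm_eq_lintegral_rpow_enorm_toReal hr.ne' hrt]
  simp only [enorm_eq_self]
  have hhol := cconv_le_holder hp0 hr0 (iv_nonneg q) (by rwa [← iv_eq]) (by rwa [← iv_eq])
    (by rw [← iv_eq, ← iv_eq, h]) hF hG
  by_cases hqt : q = ∞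
  · subst hqt
    refine eLpNorm_top_le fun x => (hhol x).trans (le_of_eq ?_)
    simp [ivtop]
  have hq0 := ENNReal.toReal_pos hq.ne' hqt
  rw [eLpNorm_eq_lintegral_rpow_enorm_toReal hq.ne' hqt]
  simp only [enorm_eq_self]
  set A := ∫⁻ z, F z ^ p.toReal with hA
  set B := ∫⁻ z, G z ^ r.toReal with hB
  rw [iv_eq q] at hhol
  rw [iv_eq, iv_eq] at hqp hqr
  have hpow : ∀ x, cconv F G x ^ q.toReal ≤
      cconv (fun z => F z ^ p.toReal) (fun z => G z ^ r.toReal) x *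
        (A ^ (1 / p.toReal - 1 / q.toReal) * B ^ (1 / r.toReal - 1 / q.toReal)) ^ q.toReal := by
    intro x
    refine (ENNReal.rpow_le_rpow (hhol x) hq0.le).trans (le_of_eq ?_)
    rw [ENNReal.mul_rpow_of_nonneg _ _ hq0.le, one_div q.toReal, ENNReal.rpow_inv_rpow hq0.ne']
  have hint := lintegral_mono (μ := volume) hpow
  rw [lintegral_mul_const _ (measurable_cconv (by fun_prop) (by fun_prop)),
    lintegral_cconv (by fun_prop) (by fun_prop), ← hA, ← hB] at hint
  refine (ENNReal.rpow_le_rpow hint (by positivity)).trans (le_of_eq ?_)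
  rw [ENNReal.mul_rpow_of_nonneg _ _ (by positivity),
    ENNReal.mul_rpow_of_nonneg _ _ (by positivity)]
  rw [← ENNReal.rpow_mul _ q.toReal, mul_one_div_cancel hq0.ne', ENNReal.rpow_one, mul_mul_mul_comm,
    ← ENNReal.rpow_add_of_nonneg _ _ (by positivity) (by linarith),
    ← ENNReal.rpow_add_of_nonneg _ _ (by positivity) (by linarith)]
  simp

/-! ### The weighted inequality -/

/-- A bound for `F ∗ G` in the unweighted space `L^q`. The surplus
`1 + 1/q - 1/q₁ - 1/q₂ ≥ 0` is split between the two factors proportionally to `a₁`, `a₂`, so that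
each of them embeds into a Lebesgue space and Young's inequality applies to the new exponents. -/
lemma half {n : ℕ} (hn : 1 ≤ n) {q q₁ q₂ : ℝ≥0∞} (hq : 0 < q) (hq₁ : 0 < q₁) (hq₂ : 0 < q₂)
    {a₁ a₂ : ℝ} (ha₁ : 0 ≤ a₁) (ha₂ : 0 ≤ a₂)
    (h₁ : iv q ≤ iv q₁) (h₂ : iv q ≤ iv q₂)
    (h₃ : 1 + iv q < iv q₁ + a₁ / n + iv q₂ + a₂ / n)
    (h₄ : iv q₁ + iv q₂ ≤ 1 + iv q) :
    ∃ C : ℝ≥0, ∀ F G : (Fin n → ℝ) → ℝ≥0∞, Measurable F → Measurable G →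
      eLpNorm (cconv F G) q volume ≤ C * eLpNorm (fun x => F x * wt a₁ x) q₁ volume *
        eLpNorm (fun x => G x * wt a₂ x) q₂ volume := by
  have hn0 : (0 : ℝ) < n := by exact_mod_cast hn
  set D := 1 + iv q - iv q₁ - iv q₂ with hD
  have hD0 : 0 ≤ D := by linarith
  have hDlt : D < (a₁ + a₂) / n := by rw [add_div]; linarith
  have hsum : 0 < a₁ + a₂ := by
    by_contra! hle
    have := div_nonpos_of_nonpos_of_nonneg hle hn0.le
    linarith
  have hθ : D / (a₁ + a₂) < 1 / n := by
    rw [div_lt_div_iff₀ hsum hn0]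
    rw [lt_div_iff₀ hn0] at hDlt
    linarith
  set θ := D / (a₁ + a₂) with hθdef
  have hθ0 : 0 ≤ θ := by positivity
  have hθD : θ * a₁ + θ * a₂ = D := by
    rw [← mul_add, hθdef, div_mul_cancel₀ _ hsum.ne']
  have hexp : ∀ {u a : ℝ}, 0 ≤ u → 0 ≤ a →
      ∃ r : ℝ≥0∞, 0 < r ∧ iv r = u + θ * a := by
    intro u a hu ha
    refine ⟨(ENNReal.ofReal (u + θ * a))⁻¹, ENNReal.inv_pos.2 ENNReal.ofReal_ne_top, ?_⟩
    rw [iv, inv_inv, ENNReal.toReal_ofReal (by positivity)]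
  have halt : ∀ {u a : ℝ}, 0 ≤ a → u + θ * a = u ∨ u + θ * a < u + a / n := by
    intro u a ha
    rcases ha.eq_or_lt with rfl | ha
    · left; simp
    · right
      have := mul_lt_mul_of_pos_right hθ ha
      rw [one_div_mul_eq_div] at this
      linarith
  obtain ⟨r₁, hr₁, hiv₁⟩ := hexp (iv_nonneg q₁) ha₁
  obtain ⟨r₂, hr₂, hiv₂⟩ := hexp (iv_nonneg q₂) ha₂
  have hp₁ : 0 ≤ θ * a₁ := by positivity
  have hp₂ : 0 ≤ θ * a₂ := by positivity
  obtain ⟨C₁, hC₁⟩ := embed hn hq₁ hr₁ ha₁ (by linarith) (by rw [hiv₁]; exact halt ha₁)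
  obtain ⟨C₂, hC₂⟩ := embed hn hq₂ hr₂ ha₂ (by linarith) (by rw [hiv₂]; exact halt ha₂)
  refine ⟨C₁ * C₂, fun F G hF hG => ?_⟩
  refine (young hr₁ hr₂ hq (by linarith) (by linarith) (by linarith) hF hG).trans ?_
  refine (mul_le_mul' (hC₁ F hF) (hC₂ G hG)).trans (le_of_eq ?_)
  push_cast
  ring

/-- reduction case of the continuous bracket-weighted Young
inequality. -/
theorem bracket_weighted_young_reduction
    (n : ℕ) (hn : 1 ≤ n) (q q₁ q₂ : ℝ≥0∞) (hq : 0 < q) (hq₁ : 0 < q₁) (hq₂ : 0 < q₂)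
    (s s₁ s₂ : ℝ) (hs : 0 < s) (hs₁ : s ≤ s₁) (hs₂ : s ≤ s₂)
    (h₁ : iv q ≤ iv q₁) (h₂ : iv q ≤ iv q₂)
    (h₃ : 1 + iv q + s / (n : ℝ) < iv q₁ + s₁ / (n : ℝ) + iv q₂ + s₂ / (n : ℝ))
    (h₄ : iv q₁ + iv q₂ ≤ 1 + iv q) :
    ∃ C : ℝ≥0, ∀ f g : (Fin n → ℝ) → ℝ≥0∞, Measurable f → Measurable g →
      Lns n q s (cconv f g) ≤ C * Lns n q₁ s₁ f * Lns n q₂ s₂ g := by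
  -- the conditions on the exponents force `1/q ≤ 1`, so that `L^q` satisfies Minkowski
  have hq1 : 1 ≤ q := one_le_of_iv_le hq (by linarith)
  obtain ⟨C₁, hC₁⟩ := half hn hq hq₁ hq₂ (a₁ := s₁ - s) (a₂ := s₂) (by linarith) (by linarith)
    h₁ h₂ (by rw [sub_div]; linarith) h₄
  obtain ⟨C₂, hC₂⟩ := half hn hq hq₁ hq₂ (a₁ := s₁) (a₂ := s₂ - s) (by linarith) (by linarith)
    h₁ h₂ (by rw [sub_div]; linarith) h₄
  set K : ℝ≥0 := Real.toNNReal (2 ^ s) with hK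
  refine ⟨K * (C₁ + C₂), fun f g hf hg => ?_⟩
  rw [Lns_eq_eLpNorm hq, Lns_eq_eLpNorm hq₁, Lns_eq_eLpNorm hq₂]
  have hfs : Measurable fun x => f x * wt s x := hf.mul (measurable_wt s)
  have hgs : Measurable fun x => g x * wt s x := hg.mul (measurable_wt s)
  have e₁ := hC₁ _ g hfs hg
  have e₂ := hC₂ f _ hf hgs
  simp only [mul_assoc (f _), mul_assoc (g _), wt_mul_wt, add_sub_cancel] at e₁ e₂
  have hm₁ := measurable_cconv hfs hg
  have hm₂ := measurable_cconv hf hgs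
  have hpt : ∀ x, ‖cconv f g x * wt s x‖ₑ ≤ K * ‖(cconv (fun x => f x * wt s x) g +
      cconv f (fun x => g x * wt s x)) x‖ₑ := by
    intro x
    simp only [enorm_eq_self, Pi.add_apply]
    unfold cconv
    rw [← lintegral_mul_const _ (by fun_prop),
      ← lintegral_add_left (by fun_prop),
      ← lintegral_const_mul' _ _ ENNReal.coe_ne_top]
    refine lintegral_mono fun y => ?_
    calc f (x - y) * g y * wt s x
        ≤ f (x - y) * g y * (K * (wt s (x - y) + wt s y)) := by
          gcongr
          exact wt_le hs.le x y
      _ = _ := by ring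
  calc _ ≤ K * eLpNorm (cconv (fun x => f x * wt s x) g +
        cconv f (fun x => g x * wt s x)) q volume := by
        refine eLpNorm_le_nnreal_smul_eLpNorm_of_ae_le_mul' (Filter.Eventually.of_forall hpt) q
    _ ≤ K * (eLpNorm (cconv (fun x => f x * wt s x) g) q volume +
        eLpNorm (cconv f (fun x => g x * wt s x)) q volume) := by
        gcongr
        exact eLpNorm_add_le hm₁.aestronglyMeasurable hm₂.aestronglyMeasurable hq1
    _ ≤ _ := (mul_le_mul_right (add_le_add e₁ e₂) _).trans (le_of_eq (by push_cast; ring))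
end
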